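/- Let m ≥ 1 be an integer, h = 2m, let 𝔅 be the 2h×2h complex matrix given in block form by 𝔅 = [[O_h, (1/2)I_h],[(1/2)I_h, O_h]], and let J_m be the h×h skew-symmetric matrix consisting of m diagonal 2×2 blocks [[0,1],[−1,0]]. Then the complex vector space of all 2h×2h complex matrices H = [[H₁₁, H₁₂],[H₂₁, H₂₂]] (h×h blocks) satisfying Hᵗ·𝔅 = −𝔅·H together with the three linear conditions H₂₁ᵗ = 0, H₂₁ᵗ + J_m·H₂₂ᵗ − H₁₁ᵗ·J_m − J_m·H₁₂ᵗ·J_m = 0, and H₂₁ᵗ − J_m·H₂₂ᵗ + H₁₁ᵗ·J_m − J_m·H₁₂ᵗ·J_m = 0 has dimension h(h+1)/2 over ℂ. -/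

import Mathlib

open Matrix

/-- The `2m×2m` skew-symmetric matrix `J_m` with `m` diagonal blocks `[[0,1],[-1,0]]`
(here `h = 2m`). -/
noncomputable def Jmat (m : ℕ) : Matrix (Fin 2 × Fin m) (Fin 2 × Fin m) ℂ :=
  Matrix.blockDiagonal fun _ : Fin m => !![0, 1; -1, 0]

/-- The matrix `𝔅 = [[O_h, (1/2)I_h],[(1/2)I_h, O_h]]` of the quadratic form, `h = 2m`. -/
noncomputable def Bmat (m : ℕ) :
    Matrix ((Fin 2 × Fin m) ⊕ (Fin 2 × Fin m)) ((Fin 2 × Fin m) ⊕ (Fin 2 × Fin m)) ℂ :=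
  Matrix.fromBlocks 0 ((1 / 2 : ℂ) • 1) ((1 / 2 : ℂ) • 1) 0

/-- The kernel of the differential at the identity: matrices `H ∈ so(2h,Q)` satisfying the
three linear conditions `H₂₁ᵗ = 0`, `H₂₁ᵗ + J_m H₂₂ᵗ - H₁₁ᵗ J_m - J_m H₁₂ᵗ J_m = 0` and
`H₂₁ᵗ - J_m H₂₂ᵗ + H₁₁ᵗ J_m - J_m H₁₂ᵗ J_m = 0`. -/
noncomputable def kerDf (m : ℕ) :
    Submodule ℂ (Matrix ((Fin 2 × Fin m) ⊕ (Fin 2 × Fin m))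
      ((Fin 2 × Fin m) ⊕ (Fin 2 × Fin m)) ℂ) where
  carrier := {H | Hᵀ * Bmat m = -(Bmat m * H) ∧
    (H.toBlocks₂₁)ᵀ = 0 ∧
    (H.toBlocks₂₁)ᵀ + Jmat m * (H.toBlocks₂₂)ᵀ - (H.toBlocks₁₁)ᵀ * Jmat m
      - Jmat m * (H.toBlocks₁₂)ᵀ * Jmat m = 0 ∧
    (H.toBlocks₂₁)ᵀ - Jmat m * (H.toBlocks₂₂)ᵀ + (H.toBlocks₁₁)ᵀ * Jmat m
      - Jmat m * (H.toBlocks₁₂)ᵀ * Jmat m = 0}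
  zero_mem' := by
    have z11 : (0 : Matrix ((Fin 2 × Fin m) ⊕ (Fin 2 × Fin m))
        ((Fin 2 × Fin m) ⊕ (Fin 2 × Fin m)) ℂ).toBlocks₁₁ = 0 := rfl
    have z12 : (0 : Matrix ((Fin 2 × Fin m) ⊕ (Fin 2 × Fin m))
        ((Fin 2 × Fin m) ⊕ (Fin 2 × Fin m)) ℂ).toBlocks₁₂ = 0 := rfl
    have z21 : (0 : Matrix ((Fin 2 × Fin m) ⊕ (Fin 2 × Fin m))
        ((Fin 2 × Fin m) ⊕ (Fin 2 × Fin m)) ℂ).toBlocks₂₁ = 0 := rfl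
    have z22 : (0 : Matrix ((Fin 2 × Fin m) ⊕ (Fin 2 × Fin m))
        ((Fin 2 × Fin m) ⊕ (Fin 2 × Fin m)) ℂ).toBlocks₂₂ = 0 := rfl
    refine ⟨by simp, ?_, ?_, ?_⟩ <;> simp [z11, z12, z21, z22]
  add_mem' := by
    intro a b ha hb
    obtain ⟨ha1, ha2, ha3, ha4⟩ := ha
    obtain ⟨hb1, hb2, hb3, hb4⟩ := hb
    have e11 : (a + b).toBlocks₁₁ = a.toBlocks₁₁ + b.toBlocks₁₁ := rfl
    have e12 : (a + b).toBlocks₁₂ = a.toBlocks₁₂ + b.toBlocks₁₂ := rfl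
    have e21 : (a + b).toBlocks₂₁ = a.toBlocks₂₁ + b.toBlocks₂₁ := rfl
    have e22 : (a + b).toBlocks₂₂ = a.toBlocks₂₂ + b.toBlocks₂₂ := rfl
    refine ⟨?_, ?_, ?_, ?_⟩
    · rw [transpose_add, Matrix.add_mul, ha1, hb1, Matrix.mul_add, neg_add]
    · rw [e21, transpose_add, ha2, hb2, add_zero]
    · rw [e11, e12, e21, e22, transpose_add, transpose_add, transpose_add, transpose_add,
        Matrix.mul_add, Matrix.add_mul, Matrix.mul_add, Matrix.add_mul]
      calc a.toBlocks₂₁ᵀ + b.toBlocks₂₁ᵀ + (Jmat m * a.toBlocks₂₂ᵀ + Jmat m * b.toBlocks₂₂ᵀ)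
            - (a.toBlocks₁₁ᵀ * Jmat m + b.toBlocks₁₁ᵀ * Jmat m)
            - (Jmat m * a.toBlocks₁₂ᵀ * Jmat m + Jmat m * b.toBlocks₁₂ᵀ * Jmat m)
          = (a.toBlocks₂₁ᵀ + Jmat m * a.toBlocks₂₂ᵀ - a.toBlocks₁₁ᵀ * Jmat m
              - Jmat m * a.toBlocks₁₂ᵀ * Jmat m)
            + (b.toBlocks₂₁ᵀ + Jmat m * b.toBlocks₂₂ᵀ - b.toBlocks₁₁ᵀ * Jmat m
              - Jmat m * b.toBlocks₁₂ᵀ * Jmat m) := by abel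
        _ = 0 := by rw [ha3, hb3, add_zero]
    · rw [e11, e12, e21, e22, transpose_add, transpose_add, transpose_add, transpose_add,
        Matrix.mul_add, Matrix.add_mul, Matrix.mul_add, Matrix.add_mul]
      calc a.toBlocks₂₁ᵀ + b.toBlocks₂₁ᵀ - (Jmat m * a.toBlocks₂₂ᵀ + Jmat m * b.toBlocks₂₂ᵀ)
            + (a.toBlocks₁₁ᵀ * Jmat m + b.toBlocks₁₁ᵀ * Jmat m)
            - (Jmat m * a.toBlocks₁₂ᵀ * Jmat m + Jmat m * b.toBlocks₁₂ᵀ * Jmat m)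
          = (a.toBlocks₂₁ᵀ - Jmat m * a.toBlocks₂₂ᵀ + a.toBlocks₁₁ᵀ * Jmat m
              - Jmat m * a.toBlocks₁₂ᵀ * Jmat m)
            + (b.toBlocks₂₁ᵀ - Jmat m * b.toBlocks₂₂ᵀ + b.toBlocks₁₁ᵀ * Jmat m
              - Jmat m * b.toBlocks₁₂ᵀ * Jmat m) := by abel
        _ = 0 := by rw [ha4, hb4, add_zero]
  smul_mem' := by
    intro c a ha
    obtain ⟨ha1, ha2, ha3, ha4⟩ := ha
    have e11 : (c • a).toBlocks₁₁ = c • a.toBlocks₁₁ := rfl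
    have e12 : (c • a).toBlocks₁₂ = c • a.toBlocks₁₂ := rfl
    have e21 : (c • a).toBlocks₂₁ = c • a.toBlocks₂₁ := rfl
    have e22 : (c • a).toBlocks₂₂ = c • a.toBlocks₂₂ := rfl
    refine ⟨?_, ?_, ?_, ?_⟩
    · rw [transpose_smul, Matrix.smul_mul, ha1, Matrix.mul_smul, smul_neg]
    · rw [e21, transpose_smul, ha2, smul_zero]
    · rw [e11, e12, e21, e22, transpose_smul, transpose_smul, transpose_smul, transpose_smul,
        Matrix.mul_smul, Matrix.smul_mul, Matrix.mul_smul, Matrix.smul_mul,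
        ← smul_add, ← smul_sub, ← smul_sub, ha3, smul_zero]
    · rw [e11, e12, e21, e22, transpose_smul, transpose_smul, transpose_smul, transpose_smul,
        Matrix.mul_smul, Matrix.smul_mul, Matrix.mul_smul, Matrix.smul_mul,
        ← smul_sub, ← smul_add, ← smul_sub, ha4, smul_zero]

/-!
The three linear conditions say that `H` fixes to first order the row spaces of `[1 | X]` for
`X = 0, J, -J`. Fixing `X = 0` kills `H₂₁`, and the sum of the other two conditions kills `H₁₂`, so
`H = diag(A, -Aᵀ)` because `H` is skew-adjoint for `𝔅`; their difference says `AᵀJ + JA = 0`. Hence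
the kernel is a copy of the symplectic Lie algebra of `J`, which `A ↦ JA` identifies with the
symmetric matrices.
-/

section SymmetricMatrices

variable (n R : Type*) [CommRing R]

/-- The module of symmetric `n × n` matrices. -/
def symmetricMatrices : Submodule R (Matrix n n R) where
  carrier := {S | S.IsSymm}
  zero_mem' := isSymm_zero
  add_mem' := IsSymm.add
  smul_mem' c _ hS := hS.smul c

/-- A symmetric matrix is a function on unordered pairs of indices. -/
def symmetricMatricesEquiv : symmetricMatrices n R ≃ₗ[R] (Sym2 n → R) where
  toFun S := Sym2.lift ⟨S.1, fun i j => S.2.apply j i⟩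
  invFun f := ⟨of fun i j => f s(i, j), IsSymm.ext fun _ _ => congrArg f Sym2.eq_swap⟩
  map_add' _ _ := funext <| Sym2.ind fun _ _ => rfl
  map_smul' _ _ := funext <| Sym2.ind fun _ _ => rfl
  left_inv _ := rfl
  right_inv _ := funext <| Sym2.ind fun _ _ => rfl

theorem finrank_symmetricMatrices [Fintype n] [Nontrivial R] :
    Module.finrank R (symmetricMatrices n R) = (Fintype.card n + 1).choose 2 := by
  classical
  rw [(symmetricMatricesEquiv n R).finrank_eq, Module.finrank_fintype_fun_eq_card, Sym2.card]

end SymmetricMatrices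

section SkewAdjoint

variable {n R : Type*} [Fintype n] [CommRing R] {J : Matrix n n R}

theorem isSkewAdjoint_iff_isSymm_mul (hJ : Jᵀ = -J) (A : Matrix n n R) :
    J.IsSkewAdjoint A ↔ (J * A).IsSymm := by
  rw [Matrix.IsSkewAdjoint, Matrix.IsAdjointPair, IsSymm, transpose_mul, hJ, Matrix.mul_neg,
    Matrix.mul_neg, neg_eq_iff_eq_neg]

variable [DecidableEq n]

theorem finrank_skewAdjointMatricesSubmodule [Nontrivial R] (hJ : Jᵀ = -J) (hJu : IsUnit J) :
    Module.finrank R (skewAdjointMatricesSubmodule J) = (Fintype.card n + 1).choose 2 := by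
  let mulJ : Matrix n n R ≃ₗ[R] Matrix n n R :=
    DistribMulAction.toLinearEquiv R (Matrix n n R) hJu.unit
  have comap_mulJ :
      (symmetricMatrices n R).comap mulJ.toLinearMap = skewAdjointMatricesSubmodule J := by
    ext A
    exact (isSkewAdjoint_iff_isSymm_mul hJ A).symm.trans (mem_skewAdjointMatricesSubmodule J A).symm
  rw [← comap_mulJ, Submodule.comap_equiv_eq_map_symm, LinearEquiv.finrank_map_eq,
    finrank_symmetricMatrices]

theorem isSkewAdjoint_JD_fromBlocks_iff (A B C D : Matrix n n R) :
    (LieAlgebra.Orthogonal.JD n R).IsSkewAdjoint (fromBlocks A B C D) ↔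
      Cᵀ = -C ∧ Bᵀ = -B ∧ D = -Aᵀ := by
  have transpose_eq_iff : Dᵀ = -A ↔ Aᵀ = -D := by
    rw [← transpose_inj, transpose_transpose, transpose_neg, eq_comm, neg_eq_iff_eq_neg]
  have eq_iff : D = -Aᵀ ↔ Aᵀ = -D := by rw [eq_comm, neg_eq_iff_eq_neg]
  simp only [Matrix.IsSkewAdjoint, Matrix.IsAdjointPair, LieAlgebra.Orthogonal.JD,
    fromBlocks_transpose, fromBlocks_multiply, fromBlocks_neg, fromBlocks_inj, Matrix.mul_zero,
    Matrix.zero_mul, Matrix.mul_one, Matrix.one_mul, zero_add, add_zero, transpose_eq_iff, eq_iff]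
  tauto

end SkewAdjoint

section GraphVelocity

variable {l n R : Type*} [Fintype l] [Fintype n] [CommRing R]

/-- The velocity at `X` of the curve of matrices `X(t)` for which `[1 | X(t)]` has the same row
space as `[1 | X] (1 + tH)ᵀ`. Since `[1 | X] Hᵀ = [U | V]` with `U = H₁₁ᵀ + X H₁₂ᵀ` and
`V = H₂₁ᵀ + X H₂₂ᵀ`, it equals `V - U X`. It is the differential of `g ↦ g([1 | X])` at the
identity, read in the chart `[1 | X] ↦ X`. -/
def graphVelocity (X : Matrix l n R) : Matrix (l ⊕ n) (l ⊕ n) R →ₗ[R] Matrix l n R where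
  toFun H := H.toBlocks₂₁ᵀ + X * H.toBlocks₂₂ᵀ - H.toBlocks₁₁ᵀ * X - X * H.toBlocks₁₂ᵀ * X
  map_add' H K := by
    change (H.toBlocks₂₁ + K.toBlocks₂₁)ᵀ + X * (H.toBlocks₂₂ + K.toBlocks₂₂)ᵀ
      - (H.toBlocks₁₁ + K.toBlocks₁₁)ᵀ * X - X * (H.toBlocks₁₂ + K.toBlocks₁₂)ᵀ * X = _
    simp only [transpose_add, Matrix.mul_add, Matrix.add_mul]
    abel
  map_smul' c H := by
    change (c • H.toBlocks₂₁)ᵀ + X * (c • H.toBlocks₂₂)ᵀ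
      - (c • H.toBlocks₁₁)ᵀ * X - X * (c • H.toBlocks₁₂)ᵀ * X = _
    simp only [transpose_smul, Matrix.mul_smul, Matrix.smul_mul, smul_add, smul_sub,
      RingHom.id_apply]

theorem graphVelocity_fromBlocks (X : Matrix l n R) (A : Matrix l l R) (B : Matrix l n R)
    (C : Matrix n l R) (D : Matrix n n R) :
    graphVelocity X (fromBlocks A B C D) = Cᵀ + X * Dᵀ - Aᵀ * X - X * Bᵀ * X :=
  rfl

theorem graphVelocity_zero_fromBlocks (A : Matrix l l R) (B : Matrix l n R)
    (C : Matrix n l R) (D : Matrix n n R) :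
    graphVelocity 0 (fromBlocks A B C D) = Cᵀ := by
  simp [graphVelocity_fromBlocks]

theorem graphVelocity_add_graphVelocity_neg (X : Matrix l n R) (H : Matrix (l ⊕ n) (l ⊕ n) R) :
    graphVelocity X H + graphVelocity (-X) H =
      (2 : R) • (graphVelocity 0 H - X * H.toBlocks₁₂ᵀ * X) := by
  simp only [graphVelocity, LinearMap.coe_mk, AddHom.coe_mk, Matrix.mul_neg, Matrix.neg_mul,
    Matrix.zero_mul, Matrix.mul_zero, two_smul]
  abel

theorem toBlocks₁₂_eq_zero_of_graphVelocity_eq_zero [DecidableEq n] {J : Matrix n n R}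
    {H : Matrix (n ⊕ n) (n ⊕ n) R} (h2 : IsSMulRegular R (2 : R)) (hJu : IsUnit J)
    (h₀ : graphVelocity 0 H = 0) (hpos : graphVelocity J H = 0) (hneg : graphVelocity (-J) H = 0) :
    H.toBlocks₁₂ = 0 := by
  have two_smul_eq_zero : (2 : R) • -(J * H.toBlocks₁₂ᵀ * J) = 0 := by
    simpa only [hpos, hneg, h₀, zero_sub, add_zero, eq_comm] using
      graphVelocity_add_graphVelocity_neg J H
  have sandwich_eq_zero : J * H.toBlocks₁₂ᵀ * J = 0 :=
    neg_eq_zero.1 (h2.matrix.right_eq_zero_of_smul two_smul_eq_zero)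
  rwa [hJu.mul_left_eq_zero, hJu.mul_right_eq_zero, transpose_eq_zero] at sandwich_eq_zero

end GraphVelocity

section DiagNegTranspose

variable {n R : Type*} [CommRing R]

/-- The embedding `A ↦ diag(A, -Aᵀ)` of the general linear Lie algebra into the orthogonal Lie
algebra of the split form `[[0, 1], [1, 0]]`. -/
def diagNegTranspose : Matrix n n R →ₗ[R] Matrix (n ⊕ n) (n ⊕ n) R where
  toFun A := fromBlocks A 0 0 (-Aᵀ)
  map_add' A B := by
    simp only [fromBlocks_add, transpose_add, neg_add, add_zero]
  map_smul' c A := by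
    simp only [fromBlocks_smul, transpose_smul, smul_neg, smul_zero, RingHom.id_apply]

theorem diagNegTranspose_apply (A : Matrix n n R) :
    diagNegTranspose A = fromBlocks A 0 0 (-Aᵀ) :=
  rfl

theorem diagNegTranspose_injective :
    Function.Injective (diagNegTranspose : Matrix n n R →ₗ[R] Matrix (n ⊕ n) (n ⊕ n) R) :=
  fun _ _ h => (fromBlocks_inj.1 h).1

variable [Fintype n]

theorem graphVelocity_diagNegTranspose (X A : Matrix n n R) :
    graphVelocity X (diagNegTranspose A) = -(Aᵀ * X + X * A) := by
  rw [diagNegTranspose_apply, graphVelocity_fromBlocks, transpose_neg, transpose_transpose,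
    transpose_zero, Matrix.mul_zero, Matrix.zero_mul, Matrix.mul_neg]
  abel

theorem graphVelocity_diagNegTranspose_eq_zero_iff (X A : Matrix n n R) :
    graphVelocity X (diagNegTranspose A) = 0 ↔ X.IsSkewAdjoint A := by
  rw [graphVelocity_diagNegTranspose, neg_eq_zero, Matrix.IsSkewAdjoint, Matrix.IsAdjointPair,
    Matrix.mul_neg, add_eq_zero_iff_eq_neg]

end DiagNegTranspose

section TripleStabilizer

variable {n R : Type*} [Fintype n] [DecidableEq n] [CommRing R]

/-- The infinitesimal stabilizer, in the orthogonal Lie algebra of the split form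
`[[0, 1], [1, 0]]`, of the three row spaces of `[1 | 0]`, `[1 | J]` and `[1 | -J]`. -/
def tripleStabilizer (J : Matrix n n R) : Submodule R (Matrix (n ⊕ n) (n ⊕ n) R) :=
  skewAdjointMatricesSubmodule (LieAlgebra.Orthogonal.JD n R) ⊓
    ((graphVelocity 0).ker ⊓ ((graphVelocity J).ker ⊓ (graphVelocity (-J)).ker))

variable {J : Matrix n n R}

theorem mem_tripleStabilizer_iff {H : Matrix (n ⊕ n) (n ⊕ n) R} :
    H ∈ tripleStabilizer J ↔ (LieAlgebra.Orthogonal.JD n R).IsSkewAdjoint H ∧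
      graphVelocity 0 H = 0 ∧ graphVelocity J H = 0 ∧ graphVelocity (-J) H = 0 := by
  simp only [tripleStabilizer, Submodule.mem_inf, mem_skewAdjointMatricesSubmodule,
    LinearMap.mem_ker]

theorem diagNegTranspose_mem_tripleStabilizer_iff {A : Matrix n n R} :
    diagNegTranspose A ∈ tripleStabilizer J ↔ J.IsSkewAdjoint A := by
  have skewAdjoint_JD : (LieAlgebra.Orthogonal.JD n R).IsSkewAdjoint (diagNegTranspose A) :=
    (isSkewAdjoint_JD_fromBlocks_iff A 0 0 (-Aᵀ)).2 (by simp)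
  have velocity_zero : graphVelocity 0 (diagNegTranspose A) = 0 := by
    simp [graphVelocity_diagNegTranspose]
  have velocity_neg :
      graphVelocity (-J) (diagNegTranspose A) = -graphVelocity J (diagNegTranspose A) := by
    simp only [graphVelocity_diagNegTranspose, Matrix.mul_neg, Matrix.neg_mul, neg_add]
  simp only [mem_tripleStabilizer_iff, skewAdjoint_JD, velocity_zero, velocity_neg, neg_eq_zero,
    and_self, true_and, graphVelocity_diagNegTranspose_eq_zero_iff]

theorem diagNegTranspose_toBlocks₁₁_of_mem_tripleStabilizer (h2 : IsSMulRegular R (2 : R))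
    (hJu : IsUnit J) {H : Matrix (n ⊕ n) (n ⊕ n) R} (hH : H ∈ tripleStabilizer J) :
    diagNegTranspose H.toBlocks₁₁ = H := by
  obtain ⟨hso, h₀, hpos, hneg⟩ := mem_tripleStabilizer_iff.1 hH
  have hB : H.toBlocks₁₂ = 0 :=
    toBlocks₁₂_eq_zero_of_graphVelocity_eq_zero h2 hJu h₀ hpos hneg
  rw [← fromBlocks_toBlocks H] at hso h₀
  have hC : H.toBlocks₂₁ = 0 := by rwa [graphVelocity_zero_fromBlocks, transpose_eq_zero] at h₀
  have hD : H.toBlocks₂₂ = -H.toBlocks₁₁ᵀ := ((isSkewAdjoint_JD_fromBlocks_iff _ _ _ _).1 hso).2.2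
  exact ext_iff_blocks.2 ⟨rfl, hB.symm, hC.symm, hD.symm⟩

theorem tripleStabilizer_eq_map_diagNegTranspose (h2 : IsSMulRegular R (2 : R)) (hJu : IsUnit J) :
    tripleStabilizer J = (skewAdjointMatricesSubmodule J).map diagNegTranspose := by
  apply le_antisymm
  · intro H hH
    have H_eq := diagNegTranspose_toBlocks₁₁_of_mem_tripleStabilizer h2 hJu hH
    rw [← H_eq, diagNegTranspose_mem_tripleStabilizer_iff] at hH
    exact ⟨_, (mem_skewAdjointMatricesSubmodule _ _).2 hH, H_eq⟩
  · rintro _ ⟨A, hA, rfl⟩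
    exact diagNegTranspose_mem_tripleStabilizer_iff.2 ((mem_skewAdjointMatricesSubmodule _ _).1 hA)

theorem finrank_kerDf_general [Nontrivial R] (h2 : IsSMulRegular R (2 : R)) (hJ : Jᵀ = -J)
    (hJu : IsUnit J) :
    Module.finrank R (tripleStabilizer J) = (Fintype.card n + 1).choose 2 := by
  rw [tripleStabilizer_eq_map_diagNegTranspose h2 hJu,
    ← (Submodule.equivMapOfInjective _ diagNegTranspose_injective _).finrank_eq,
    finrank_skewAdjointMatricesSubmodule hJ hJu]

end TripleStabilizer

theorem Jmat_transpose (m : ℕ) : (Jmat m)ᵀ = -Jmat m := by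
  rw [Jmat, blockDiagonal_transpose, ← blockDiagonal_neg]
  congr with _ i j
  fin_cases i <;> fin_cases j <;> simp

theorem isUnit_Jmat (m : ℕ) : IsUnit (Jmat m) := by
  rw [isUnit_iff_isUnit_det, Jmat, det_blockDiagonal]
  simp [det_fin_two]

theorem Bmat_eq_smul_JD (m : ℕ) :
    Bmat m = (1 / 2 : ℂ) • LieAlgebra.Orthogonal.JD (Fin 2 × Fin m) ℂ := by
  simp [Bmat, LieAlgebra.Orthogonal.JD, fromBlocks_smul]

theorem kerDf_eq_tripleStabilizer (m : ℕ) : kerDf m = tripleStabilizer (Jmat m) := by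
  ext H
  have half_ne_zero : (1 / 2 : ℂ) ≠ 0 := by norm_num
  have skewAdjoint_iff : Hᵀ * Bmat m = -(Bmat m * H) ↔
      (LieAlgebra.Orthogonal.JD (Fin 2 × Fin m) ℂ).IsSkewAdjoint H := by
    rw [Bmat_eq_smul_JD, Matrix.mul_smul, Matrix.smul_mul, ← smul_neg,
      (smul_right_injective _ half_ne_zero).eq_iff, ← Matrix.mul_neg]
    rfl
  rw [mem_tripleStabilizer_iff, ← skewAdjoint_iff]
  change _ ∧ _ ∧ _ ∧ _ ↔ _
  simp [graphVelocity, sub_eq_add_neg]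

/-- The kernel of the differential has complex dimension `h(h+1)/2`, where `h = 2m`. -/
theorem finrank_kerDf (m : ℕ) (hm : 1 ≤ m) :
    Module.finrank ℂ (kerDf m) = 2 * m * (2 * m + 1) / 2 := by
  have two_regular : IsSMulRegular ℂ (2 : ℂ) := IsSMulRegular.of_ne_zero two_ne_zero
  rw [kerDf_eq_tripleStabilizer,
    finrank_kerDf_general two_regular (Jmat_transpose m) (isUnit_Jmat m), Nat.choose_two_right]
  simp [mul_comm]
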